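/- Let R be a commuting family of self-adjoint operators in B(H), v a unit vector, S = [R''v] the closed span of {Av : A ∈ R''}. If A is self-adjoint, commutes with every element of R, and Av ∈ S, then A ∈ B(S^⊥) ⊕ (R'' P_S); if A does not leave S invariant, then A ∉ B(S^⊥) ⊕ (R'' P_S). -/

import Mathlib

/-- `S = [R''v]`: the closed linear span of the orbit of v under the double commutant
R'' of the family R. -/
noncomputable def beableSpan {H : Type*} [NormedAddCommGroup H] [InnerProductSpace ℂ H]
    (R : Set (H →L[ℂ] H)) (v : H) : Submodule ℂ H :=
  (Submodule.span ℂ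
    ((fun T : H →L[ℂ] H => T v) '' Set.centralizer (Set.centralizer R))).topologicalClosure

/-- The algebra `B(S^⊥) ⊕ R''P_S`: operators A such that S = [R''v] reduces A and A
agrees on S with some element of R''. -/
noncomputable def BRv {H : Type*} [NormedAddCommGroup H] [InnerProductSpace ℂ H]
    [CompleteSpace H] (R : Set (H →L[ℂ] H)) (v : H) : Set (H →L[ℂ] H) :=
  {a | (∀ x ∈ beableSpan R v, a x ∈ beableSpan R v) ∧
    (∀ x ∈ beableSpan R v, ContinuousLinearMap.adjoint a x ∈ beableSpan R v) ∧
    ∃ T ∈ Set.centralizer (Set.centralizer R), ∀ x ∈ beableSpan R v, a x = T x}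

/-!
Let `M` be an abelian star algebra with commutant `M'`, and let `S = [Mv]`. The vector `v` is
tracial for the operators in `M'` mapping `v` into `S`, because the isometry `X v ↦ star X v`,
`X ∈ M`, extends to an antiunitary of `S` implementing the adjoint. As `v` is cyclic for `M` on `S`,
these operators commute on `S`.

Let `A ∈ M'` with `A v ∈ S`, let `P` be the projection onto `S`, and let `Y ∈ M'`. Then `A P`
commutes with `star (Y P) * (Y P)`, hence with its square root, and so `‖Y (A v)‖ ≤ ‖A‖ * ‖Y v‖`.
Therefore `Y v ↦ Y (A v)` extends to a bounded operator `T` on `[M'v]`; extended by zero it commutes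
with `M'`, so it is an element of `M''` that agrees with `A` at `v`, and hence on all of `S`.
-/

open Filter Topology

open scoped InnerProductSpace

theorem apply_apply_comm_of_mem_centralizer {R E : Type*} [Semiring R] [AddCommMonoid E]
    [Module R E] [TopologicalSpace E] {s : Set (E →L[R] E)} {A X : E →L[R] E}
    (hA : A ∈ Set.centralizer s) (hX : X ∈ s) (x : E) : A (X x) = X (A x) :=
  congr($(hA X hX) x).symm

section CyclicSubspace

variable {𝕜 E : Type*} [NontriviallyNormedField 𝕜] [NormedAddCommGroup E] [NormedSpace 𝕜 E]

/-- The cyclic subspace `[Mv]` of an algebra `M` of bounded operators: the closure of the orbit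
`{X v | X ∈ M}`, which is already a linear subspace. -/
noncomputable def cyclicSubspace (M : Subalgebra 𝕜 (E →L[𝕜] E)) (v : E) : Submodule 𝕜 E :=
  ((Subalgebra.toSubmodule M).map
    (ContinuousLinearMap.apply 𝕜 E v).toLinearMap).topologicalClosure

namespace cyclicSubspace

variable {M : Subalgebra 𝕜 (E →L[𝕜] E)} {A B X : E →L[𝕜] E} {v x : E}

theorem apply_mem (hX : X ∈ M) (v : E) : X v ∈ cyclicSubspace M v :=
  subset_closure ⟨X, hX, rfl⟩

theorem self_mem (M : Subalgebra 𝕜 (E →L[𝕜] E)) (v : E) : v ∈ cyclicSubspace M v :=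
  apply_mem (one_mem M) v

theorem isClosed (M : Subalgebra 𝕜 (E →L[𝕜] E)) (v : E) :
    IsClosed (cyclicSubspace M v : Set E) :=
  Submodule.isClosed_topologicalClosure _

instance instCompleteSpace [CompleteSpace E] : CompleteSpace (cyclicSubspace M v) :=
  (isClosed M v).completeSpace_coe

theorem le_of_forall_apply_mem {K : Submodule 𝕜 E} (hK : IsClosed (K : Set E))
    (h : ∀ X ∈ M, X v ∈ K) : cyclicSubspace M v ≤ K :=
  Submodule.topologicalClosure_minimal _ (Submodule.map_le_iff_le_comap.mpr h) hK

theorem map_mem (hX : X ∈ M) (hx : x ∈ cyclicSubspace M v) : X x ∈ cyclicSubspace M v :=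
  le_of_forall_apply_mem (K := (cyclicSubspace M v).comap X.toLinearMap)
    ((isClosed M v).preimage X.continuous) (fun _ hY => apply_mem (mul_mem hX hY) v) hx

theorem map_mem_of_mem_centralizer (hA : A ∈ Set.centralizer (M : Set (E →L[𝕜] E)))
    (hAv : A v ∈ cyclicSubspace M v) (hx : x ∈ cyclicSubspace M v) :
    A x ∈ cyclicSubspace M v := by
  refine le_of_forall_apply_mem (K := (cyclicSubspace M v).comap A.toLinearMap)
    ((isClosed M v).preimage A.continuous) (fun X hX => ?_) hx
  change A (X v) ∈ cyclicSubspace M v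
  rw [apply_apply_comm_of_mem_centralizer hA hX]
  exact map_mem hX hAv

theorem eqOn_of_mem_centralizer (hA : A ∈ Set.centralizer (M : Set (E →L[𝕜] E)))
    (hB : B ∈ Set.centralizer (M : Set (E →L[𝕜] E))) (h : A v = B v) :
    Set.EqOn A B (cyclicSubspace M v) := by
  refine le_of_forall_apply_mem (K := A.eqLocus B) (A.isClosed_eqLocus B) fun X hX => ?_
  change A (X v) = B (X v)
  rw [apply_apply_comm_of_mem_centralizer hA hX, apply_apply_comm_of_mem_centralizer hB hX, h]

theorem eq_zero_of_forall_inner_eq_zero {𝕜 E : Type*} [RCLike 𝕜] [NormedAddCommGroup E]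
    [InnerProductSpace 𝕜 E] {M : Subalgebra 𝕜 (E →L[𝕜] E)} {v x : E}
    (hx : x ∈ cyclicSubspace M v) (h : ∀ X ∈ M, ⟪X v, x⟫_𝕜 = 0) : x = 0 := by
  have hle : cyclicSubspace M v ≤ (𝕜 ∙ x)ᗮ :=
    le_of_forall_apply_mem (Submodule.isClosed_orthogonal _) fun X hX =>
      Submodule.mem_orthogonal_singleton_iff_inner_left.mpr (h X hX)
  exact inner_self_eq_zero.mp (Submodule.mem_orthogonal_singleton_iff_inner_left.mp (hle hx))

end cyclicSubspace

end CyclicSubspace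

section StarSubalgebra

variable {𝕜 H : Type*} [RCLike 𝕜] [NormedAddCommGroup H] [InnerProductSpace 𝕜 H] [CompleteSpace H]
  {M : StarSubalgebra 𝕜 (H →L[𝕜] H)} {A B X : H →L[𝕜] H} {v w x : H}

theorem star_mem_centralizer_starSubalgebra (hA : A ∈ Set.centralizer (M : Set (H →L[𝕜] H))) :
    star A ∈ Set.centralizer (M : Set (H →L[𝕜] H)) :=
  Set.star_mem_centralizer' (fun _ => star_mem) hA

theorem starProjection_cyclicSubspace_mem_centralizer (M : StarSubalgebra 𝕜 (H →L[𝕜] H)) (v : H) :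
    (cyclicSubspace M.toSubalgebra v).starProjection ∈
      Set.centralizer (M : Set (H →L[𝕜] H)) := by
  set P := (cyclicSubspace M.toSubalgebra v).starProjection
  have compress : ∀ X ∈ M, X * P = P * (X * P) := fun X hX => by
    ext x
    exact (Submodule.starProjection_eq_self_iff.mpr
      (cyclicSubspace.map_mem hX (Submodule.starProjection_apply_mem _ x))).symm
  have hPs : star P = P := (isSelfAdjoint_starProjection _).star_eq
  intro X hX
  calc X * P = P * X * P := by rw [compress X hX, mul_assoc]
    _ = star (P * (star X * P)) := by simp only [star_mul, star_star, hPs, mul_assoc]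
    _ = star (star X * P) := by rw [← compress (star X) (star_mem hX)]
    _ = P * X := by rw [star_mul, star_star, hPs]

theorem inner_apply_eq_of_tendsto (hA : A ∈ Set.centralizer (M : Set (H →L[𝕜] H)))
    {X : ℕ → H →L[𝕜] H} {y : H} (hX : ∀ n, X n ∈ M)
    (hx : Tendsto (fun n => X n v) atTop (𝓝 x))
    (hy : Tendsto (fun n => star (X n) v) atTop (𝓝 y)) : ⟪v, A x⟫_𝕜 = ⟪y, A v⟫_𝕜 := by
  have h : ∀ n, ⟪v, A (X n v)⟫_𝕜 = ⟪star (X n) v, A v⟫_𝕜 := fun n => by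
    rw [apply_apply_comm_of_mem_centralizer hA (hX n),
      ContinuousLinearMap.star_eq_adjoint, ContinuousLinearMap.adjoint_inner_left]
  have hlim : Tendsto (fun n => ⟪v, A (X n v)⟫_𝕜) atTop (𝓝 ⟪v, A x⟫_𝕜) :=
    tendsto_const_nhds.inner ((A.continuous.tendsto x).comp hx)
  exact tendsto_nhds_unique hlim
    ((hy.inner tendsto_const_nhds).congr fun n => (h n).symm)

section Commutative

variable [IsMulCommutative M]

theorem mem_centralizer_of_isMulCommutative (hX : X ∈ M) :
    X ∈ Set.centralizer (M : Set (H →L[𝕜] H)) :=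
  fun _ hY => setLike_mul_comm hY hX

theorem norm_star_apply_of_isMulCommutative (hX : X ∈ M) (v : H) : ‖star X v‖ = ‖X v‖ :=
  (ContinuousLinearMap.isStarNormal_iff_norm_eq_adjoint.mp
    ⟨setLike_mul_comm (star_mem hX) hX⟩ v).symm

theorem exists_seq_tendsto_apply_and_star_apply
    (hx : x ∈ cyclicSubspace M.toSubalgebra v) :
    ∃ (X : ℕ → H →L[𝕜] H) (y : H), (∀ n, X n ∈ M) ∧
      Tendsto (fun n => X n v) atTop (𝓝 x) ∧ Tendsto (fun n => star (X n) v) atTop (𝓝 y) := by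
  obtain ⟨u, hu, hux⟩ := mem_closure_iff_seq_limit.mp hx
  choose X hX hXu using hu
  have hXx : Tendsto (fun n => X n v) atTop (𝓝 x) := hux.congr fun n => (hXu n).symm
  have dist_star : ∀ m n, dist (star (X m) v) (star (X n) v) = dist (X m v) (X n v) := by
    intro m n
    rw [dist_eq_norm, dist_eq_norm, ← sub_apply, ← sub_apply, ← star_sub,
      norm_star_apply_of_isMulCommutative (sub_mem (hX m) (hX n))]
  have hcauchy : CauchySeq fun n => star (X n) v := by
    simpa only [Metric.cauchySeq_iff', dist_star] using Metric.cauchySeq_iff'.mp hXx.cauchySeq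
  obtain ⟨y, hy⟩ := cauchySeq_tendsto_of_complete hcauchy
  exact ⟨X, y, hX, hXx, hy⟩

theorem inner_apply_apply_comm (hA : A ∈ Set.centralizer (M : Set (H →L[𝕜] H)))
    (hB : B ∈ Set.centralizer (M : Set (H →L[𝕜] H)))
    (hAv : A v ∈ cyclicSubspace M.toSubalgebra v) (hBv : B v ∈ cyclicSubspace M.toSubalgebra v) :
    ⟪v, A (B v)⟫_𝕜 = ⟪v, B (A v)⟫_𝕜 := by
  obtain ⟨X, a, hX, hXv, hXa⟩ := exists_seq_tendsto_apply_and_star_apply hAv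
  obtain ⟨Y, b, hY, hYv, hYb⟩ := exists_seq_tendsto_apply_and_star_apply hBv
  have hswap : ∀ n, ⟪star (X n) v, Y n v⟫_𝕜 = ⟪star (Y n) v, X n v⟫_𝕜 := fun n => by
    simp only [ContinuousLinearMap.star_eq_adjoint, ContinuousLinearMap.adjoint_inner_left]
    exact congr(⟪v, $(setLike_mul_comm (hX n) (hY n)) v⟫_𝕜)
  calc ⟪v, A (B v)⟫_𝕜 = ⟪b, A v⟫_𝕜 := inner_apply_eq_of_tendsto hA hY hYv hYb
    _ = ⟪a, B v⟫_𝕜 :=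
      tendsto_nhds_unique (hYb.inner hXv) ((hXa.inner hYv).congr hswap)
    _ = ⟪v, B (A v)⟫_𝕜 := (inner_apply_eq_of_tendsto hB hX hXv hXa).symm

theorem eqOn_mul_comm_cyclicSubspace (hA : A ∈ Set.centralizer (M : Set (H →L[𝕜] H)))
    (hB : B ∈ Set.centralizer (M : Set (H →L[𝕜] H)))
    (hAv : A v ∈ cyclicSubspace M.toSubalgebra v) (hBv : B v ∈ cyclicSubspace M.toSubalgebra v) :
    Set.EqOn (A * B) (B * A) (cyclicSubspace M.toSubalgebra v) := by
  refine cyclicSubspace.eqOn_of_mem_centralizer (Set.mul_mem_centralizer hA hB)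
    (Set.mul_mem_centralizer hB hA) ?_
  have hmem : A (B v) - B (A v) ∈ cyclicSubspace M.toSubalgebra v :=
    sub_mem (cyclicSubspace.map_mem_of_mem_centralizer hA hAv hBv)
      (cyclicSubspace.map_mem_of_mem_centralizer hB hBv hAv)
  refine sub_eq_zero.mp (cyclicSubspace.eq_zero_of_forall_inner_eq_zero hmem fun Z hZ => ?_)
  set W := star Z with hW
  have hWM : W ∈ M := star_mem hZ
  have hWBv : W (B v) ∈ cyclicSubspace M.toSubalgebra v := cyclicSubspace.map_mem hWM hBv
  have hWB : ⟪v, A (W (B v))⟫_𝕜 = ⟪v, W (B (A v))⟫_𝕜 :=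
    inner_apply_apply_comm hA
      (Set.mul_mem_centralizer (mem_centralizer_of_isMulCommutative hWM) hB) hAv hWBv
  calc ⟪Z v, A (B v) - B (A v)⟫_𝕜 = ⟪v, W (A (B v)) - W (B (A v))⟫_𝕜 := by
        rw [← map_sub, hW, ContinuousLinearMap.star_eq_adjoint,
          ContinuousLinearMap.adjoint_inner_right]
    _ = 0 := by
        rw [← apply_apply_comm_of_mem_centralizer hA hWM, inner_sub_right, hWB, sub_self]

end Commutative

theorem exists_apply_apply_eq_and_mul_starProjection_eq (N : Subalgebra 𝕜 (H →L[𝕜] H)) {c : ℝ}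
    (h : ∀ Y ∈ N, ‖Y w‖ ≤ c * ‖Y v‖) :
    ∃ T : H →L[𝕜] H, (∀ Y ∈ N, T (Y v) = Y w) ∧
      T * (cyclicSubspace N v).starProjection = T := by
  let S := cyclicSubspace N v
  let eval (x : H) : N →ₗ[𝕜] H :=
    (ContinuousLinearMap.apply 𝕜 H x).toLinearMap ∘ₗ (Subalgebra.toSubmodule N).subtype
  let orbit : N →ₗ[𝕜] S :=
    (eval v).codRestrict S fun Y => cyclicSubspace.apply_mem Y.2 v
  have hdense : DenseRange orbit := by
    refine fun x => closure_subtype.mpr (closure_mono ?_ x.2)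
    rintro _ ⟨Y, hY, rfl⟩
    exact ⟨orbit ⟨Y, hY⟩, Set.mem_range_self _, rfl⟩
  let T : H →L[𝕜] H := (eval w).extendOfNorm orbit ∘L S.orthogonalProjectionOnto
  have hT : ∀ x : S, T x = (eval w).extendOfNorm orbit x := fun x =>
    congrArg _ (Submodule.orthogonalProjectionOnto_mem_subspace_eq_self x)
  refine ⟨T, fun Y hY => ?_, ?_⟩
  · exact (hT (orbit ⟨Y, hY⟩)).trans
      (LinearMap.extendOfNorm_eq hdense ⟨c, fun Y => h Y Y.2⟩ ⟨Y, hY⟩)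
  · ext x
    exact hT (S.orthogonalProjectionOnto x)

theorem exists_mem_centralizer_apply_eq (N : StarSubalgebra 𝕜 (H →L[𝕜] H)) {c : ℝ}
    (h : ∀ Y ∈ N, ‖Y w‖ ≤ c * ‖Y v‖) :
    ∃ T ∈ Set.centralizer (N : Set (H →L[𝕜] H)), T v = w := by
  obtain ⟨T, hT, hTP⟩ := exists_apply_apply_eq_and_mul_starProjection_eq N.toSubalgebra h
  set P := (cyclicSubspace N.toSubalgebra v).starProjection
  refine ⟨T, fun Z hZ => ?_, hT 1 (one_mem N)⟩
  have hZP : Z * P = P * Z := starProjection_cyclicSubspace_mem_centralizer N v Z hZ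
  have hcomm : Set.EqOn (Z * T) (T * Z) (cyclicSubspace N.toSubalgebra v) := by
    refine cyclicSubspace.le_of_forall_apply_mem (K := (Z * T).eqLocus (T * Z))
      ((Z * T).isClosed_eqLocus (T * Z)) fun Y hY => ?_
    change Z (T (Y v)) = T ((Z * Y) v)
    rw [hT Y hY, hT _ (mul_mem hZ hY), mul_apply_eq_comp]
  calc Z * T = Z * T * P := by rw [mul_assoc, hTP]
    _ = T * Z * P := by
      ext x
      exact hcomm (Submodule.starProjection_apply_mem _ x)
    _ = T * Z := by rw [mul_assoc, hZP, ← mul_assoc, hTP]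

end StarSubalgebra

section MaximalAbelian

variable {H : Type*} [NormedAddCommGroup H] [InnerProductSpace ℂ H] [CompleteSpace H]
  {M : StarSubalgebra ℂ (H →L[ℂ] H)} {A T Y : H →L[ℂ] H} {v : H}

theorem norm_cfcAbs_apply (T : H →L[ℂ] H) (x : H) : ‖CFC.abs T x‖ = ‖T x‖ := by
  have hsq : star (CFC.abs T) * CFC.abs T = star T * T := by
    rw [(CFC.abs_nonneg T).isSelfAdjoint.star_eq, CFC.abs_mul_abs]
  rw [← sq_eq_sq₀ (norm_nonneg _) (norm_nonneg _),
    ContinuousLinearMap.apply_norm_sq_eq_inner_adjoint_left,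
    ContinuousLinearMap.apply_norm_sq_eq_inner_adjoint_left]
  exact congr(RCLike.re ⟪$hsq x, x⟫_ℂ)

theorem norm_apply_apply_le_of_commute (h : Commute A (star T * T)) (x : H) :
    ‖T (A x)‖ ≤ ‖A‖ * ‖T x‖ := by
  have habs : Commute (CFC.abs T) A := .cfcₙ_nnreal h.symm _
  calc ‖T (A x)‖ = ‖CFC.abs T (A x)‖ := (norm_cfcAbs_apply T _).symm
    _ = ‖A (CFC.abs T x)‖ := congr(‖$habs.eq x‖)
    _ ≤ ‖A‖ * ‖CFC.abs T x‖ := A.le_opNorm _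
    _ = ‖A‖ * ‖T x‖ := by rw [norm_cfcAbs_apply]

variable [IsMulCommutative M]

theorem norm_apply_apply_le_of_mem_centralizer (hA : A ∈ Set.centralizer (M : Set (H →L[ℂ] H)))
    (hAv : A v ∈ cyclicSubspace M.toSubalgebra v)
    (hY : Y ∈ Set.centralizer (M : Set (H →L[ℂ] H))) : ‖Y (A v)‖ ≤ ‖A‖ * ‖Y v‖ := by
  set P := (cyclicSubspace M.toSubalgebra v).starProjection
  have hP : P ∈ Set.centralizer (M : Set (H →L[ℂ] H)) :=
    starProjection_cyclicSubspace_mem_centralizer M v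
  have hPmem : ∀ x, P x ∈ cyclicSubspace M.toSubalgebra v := Submodule.starProjection_apply_mem _
  have hPfix : ∀ x ∈ cyclicSubspace M.toSubalgebra v, P x = x := fun _ =>
    Submodule.starProjection_eq_self_iff.mpr
  have hPP : P * P = P := (Submodule.isIdempotentElem_starProjection _).eq
  have hPv : P v = v := hPfix v (cyclicSubspace.self_mem _ v)
  set C := star (Y * P) * (Y * P) with hC
  have hCmem : C ∈ Set.centralizer (M : Set (H →L[ℂ] H)) :=
    have hYP := Set.mul_mem_centralizer hY hP
    Set.mul_mem_centralizer (star_mem_centralizer_starSubalgebra hYP) hYP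
  have hCv : C v ∈ cyclicSubspace M.toSubalgebra v := by
    rw [hC, star_mul, (isSelfAdjoint_starProjection _).star_eq, mul_assoc]
    exact hPmem _
  have hCP : C * P = C := by rw [hC, mul_assoc, mul_assoc, hPP]
  have hAPv : (A * P) v = A v := by rw [mul_apply_eq_comp, hPv]
  have hcomm : Commute (A * P) C := by
    have heqOn := eqOn_mul_comm_cyclicSubspace (Set.mul_mem_centralizer hA hP) hCmem
      (hAPv ▸ hAv) hCv
    calc A * P * C = A * P * C * P := by rw [mul_assoc _ C, hCP]
      _ = C * (A * P) * P := by
        ext x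
        exact heqOn (hPmem x)
      _ = C * (A * P) := by rw [mul_assoc, mul_assoc A, hPP]
  calc ‖Y (A v)‖ = ‖(Y * P) ((A * P) v)‖ := by rw [hAPv, mul_apply_eq_comp, hPfix _ hAv]
    _ ≤ ‖A * P‖ * ‖(Y * P) v‖ := norm_apply_apply_le_of_commute hcomm v
    _ ≤ ‖A‖ * ‖Y v‖ := by
      rw [mul_apply_eq_comp, hPv]
      gcongr
      exact (norm_mul_le A P).trans
        (mul_le_of_le_one_right (norm_nonneg A) (Submodule.starProjection_norm_le _))

theorem exists_mem_centralizer_centralizer_eqOn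
    (hA : A ∈ Set.centralizer (M : Set (H →L[ℂ] H)))
    (hAv : A v ∈ cyclicSubspace M.toSubalgebra v) :
    ∃ T ∈ Set.centralizer (Set.centralizer (M : Set (H →L[ℂ] H))),
      Set.EqOn A T (cyclicSubspace M.toSubalgebra v) := by
  have hN : (StarSubalgebra.centralizer ℂ (M : Set (H →L[ℂ] H)) : Set (H →L[ℂ] H)) =
      Set.centralizer (M : Set (H →L[ℂ] H)) := by
    rw [StarSubalgebra.coe_centralizer, StarMemClass.star_coe_eq, Set.union_self]
  obtain ⟨T, hT, hTv⟩ := exists_mem_centralizer_apply_eq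
    (StarSubalgebra.centralizer ℂ (M : Set (H →L[ℂ] H))) fun Y hY =>
      norm_apply_apply_le_of_mem_centralizer hA hAv (hN.subset hY)
  rw [hN] at hT
  have hM : (M : Set (H →L[ℂ] H)) ⊆ Set.centralizer M :=
    fun _ => mem_centralizer_of_isMulCommutative
  exact ⟨T, hT, cyclicSubspace.eqOn_of_mem_centralizer hA
    (Set.centralizer_subset hM hT) hTv.symm⟩

end MaximalAbelian

section BeableSpan

variable {H : Type*} [NormedAddCommGroup H] [InnerProductSpace ℂ H]

theorem beableSpan_eq_cyclicSubspace {R : Set (H →L[ℂ] H)} {M : Subalgebra ℂ (H →L[ℂ] H)}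
    (hM : (M : Set (H →L[ℂ] H)) = Set.centralizer (Set.centralizer R)) (v : H) :
    beableSpan R v = cyclicSubspace M v := by
  rw [beableSpan, cyclicSubspace, ← hM]
  congr 1
  exact Submodule.span_eq (M.toSubmodule.map (ContinuousLinearMap.apply ℂ H v).toLinearMap)

end BeableSpan

theorem stmt_18_general {H : Type*} [NormedAddCommGroup H] [InnerProductSpace ℂ H]
    [CompleteSpace H] (R : Set (H →L[ℂ] H))
    (hRstar : ∀ r ∈ R, star r ∈ R)
    (hRcomm : ∀ r ∈ R, ∀ s ∈ R, Commute r s)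
    (v : H) (A : H →L[ℂ] H) :
    ((A ∈ Set.centralizer R ∧ A v ∈ beableSpan R v ∧ star A v ∈ beableSpan R v) → A ∈ BRv R v) ∧
    ((¬ ∀ x ∈ beableSpan R v, A x ∈ beableSpan R v) → A ∉ BRv R v) := by
  refine ⟨fun ⟨hA, hAv, hAv'⟩ => ?_, fun h hmem => h hmem.1⟩
  let M : StarSubalgebra ℂ (H →L[ℂ] H) :=
    .centralizer ℂ (StarSubalgebra.centralizer ℂ R : Set (H →L[ℂ] H))
  have hM : (M : Set (H →L[ℂ] H)) = Set.centralizer (Set.centralizer R) := by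
    rw [StarSubalgebra.coe_centralizer_centralizer,
      Set.union_eq_left.mpr fun r hr => star_star r ▸ hRstar _ hr]
  have hM' : Set.centralizer (M : Set (H →L[ℂ] H)) = Set.centralizer R := by
    rw [hM, Set.centralizer_centralizer_centralizer]
  have : IsMulCommutative M := .of_setLike_mul_comm fun X hX Y hY =>
    Set.centralizer_centralizer_comm_of_comm hRcomm X (hM.subset hX) Y (hM.subset hY)
  have hspan : beableSpan R v = cyclicSubspace M.toSubalgebra v := beableSpan_eq_cyclicSubspace hM v
  rw [← hM'] at hA
  rw [hspan] at hAv hAv'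
  obtain ⟨T, hT, hAT⟩ := exists_mem_centralizer_centralizer_eqOn hA hAv
  rw [BRv, hspan]
  exact ⟨fun _ => cyclicSubspace.map_mem_of_mem_centralizer hA hAv,
    fun _ => cyclicSubspace.map_mem_of_mem_centralizer
      (star_mem_centralizer_starSubalgebra hA) hAv', T, hM' ▸ hT, hAT⟩

/-- Let R be a commuting self-adjoint family in B(H), v a unit vector, S = [R''v].
If A is self-adjoint, commutes with every element of R, and Av ∈ S, then
A ∈ B(S^⊥) ⊕ R''P_S; if A does not leave S invariant, then A ∉ B(S^⊥) ⊕ R''P_S. -/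
theorem stmt_18 {H : Type*} [NormedAddCommGroup H] [InnerProductSpace ℂ H] [CompleteSpace H]
    (R : Set (H →L[ℂ] H))
    (hRsa : ∀ r ∈ R, IsSelfAdjoint r)
    (hRcomm : ∀ r ∈ R, ∀ s ∈ R, Commute r s)
    (v : H) (hv : ‖v‖ = 1)
    (A : H →L[ℂ] H) (hA : IsSelfAdjoint A) :
    ((A ∈ Set.centralizer R ∧ A v ∈ beableSpan R v) → A ∈ BRv R v) ∧
    ((¬ ∀ x ∈ beableSpan R v, A x ∈ beableSpan R v) → A ∉ BRv R v) := by
  obtain ⟨hmem, hnot_mem⟩ :=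
    stmt_18_general R (fun r hr => (hRsa r hr).star_eq.symm ▸ hr) hRcomm v A
  exact ⟨fun ⟨hAR, hAv⟩ => hmem ⟨hAR, hAv, hA.star_eq.symm ▸ hAv⟩, hnot_mem⟩
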